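/- Let N ≥ 1, fix interior indices m,n,p ∈ {1,…,N}, and suppose the lattice functions u_{i,j,l} : ℝ → ℝ (indices in {0,…,N+1}) are twice differentiable and that u_{m,n,p} satisfies the lattice equation ü_{m,n,p} − c²∇²u_{m,n,p} + μu_{m,n,p} + V′(u_{m,n,p}) − J = β∇²u̇_{m,n,p} − γu̇_{m,n,p} at time t. Define K_{i,j,l} = −c²·u̇_{i,j,l}·(u_{i,j,l} − u_{i−1,j,l}), K′_{i,j,l} = −c²·u̇_{i,j,l}·(u_{i,j,l} − u_{i,j−1,l}), K″_{i,j,l} = −c²·u̇_{i,j,l}·(u_{i,j,l} − u_{i,j,l−1}). Then the node Hamiltonian H_{m,n,p} is differentiable at t with dH_{m,n,p}/dt = (K_{m,n,p} − K_{m+1,n,p}) + (K′_{m,n,p} − K′_{m,n+1,p}) + (K″_{m,n,p} − K″_{m,n,p+1}) + β·(u̇_{m+1,n,p} − 2u̇_{m,n,p} + u̇_{m−1,n,p})·u̇_{m,n,p} + β·(u̇_{m,n+1,p} − 2u̇_{m,n,p} + u̇_{m,n−1,p})·u̇_{m,n,p} + β·(u̇_{m,n,p+1} − 2u̇_{m,n,p}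 + u̇_{m,n,p−1})·u̇_{m,n,p} − γ·(u̇_{m,n,p})². -/

import Mathlib

noncomputable section

open Finset

/-- Discrete Laplacian on the three-dimensional lattice. -/
def dLap (u : ℤ → ℤ → ℤ → ℝ → ℝ) (m n p : ℤ) (t : ℝ) : ℝ :=
  u (m + 1) n p t + u (m - 1) n p t + u m (n + 1) p t + u m (n - 1) p t
    + u m n (p + 1) t + u m n (p - 1) t - 6 * u m n p t

/-- Time derivative of the node function. -/
def ud (u : ℤ → ℤ → ℤ → ℝ → ℝ) (m n p : ℤ) (t : ℝ) : ℝ := deriv (u m n p) t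

/-- Hamiltonian of the lattice node at `(m,n,p)`. -/
def nodeH (c μ J : ℝ) (V : ℝ → ℝ) (u : ℤ → ℤ → ℤ → ℝ → ℝ) (m n p : ℤ) (t : ℝ) : ℝ :=
  (1:ℝ)/2 * ((ud u m n p t) ^ 2 + c ^ 2 * (u (m + 1) n p t - u m n p t) ^ 2
      + c ^ 2 * (u m (n + 1) p t - u m n p t) ^ 2
      + c ^ 2 * (u m n (p + 1) t - u m n p t) ^ 2
      + μ * (u m n p t) ^ 2)
    + V (u m n p t) - J * u m n p t

/-- The fluxes `K`, `K′`, `K″` of the lattice. -/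
def fluxX (c : ℝ) (u : ℤ → ℤ → ℤ → ℝ → ℝ) (i j l : ℤ) (t : ℝ) : ℝ :=
  -(c ^ 2) * ud u i j l t * (u i j l t - u (i - 1) j l t)

def fluxY (c : ℝ) (u : ℤ → ℤ → ℤ → ℝ → ℝ) (i j l : ℤ) (t : ℝ) : ℝ :=
  -(c ^ 2) * ud u i j l t * (u i j l t - u i (j - 1) l t)

def fluxZ (c : ℝ) (u : ℤ → ℤ → ℤ → ℝ → ℝ) (i j l : ℤ) (t : ℝ) : ℝ :=
  -(c ^ 2) * ud u i j l t * (u i j l t - u i j (l - 1) t)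

/-!
Along any motion, `dH/dt` is `(ü + μ u + V'(u) - J) u̇` plus a term `c² (u₊ - u) (u̇₊ - u̇)` for
each forward bond. The discrete product rule writes that term as a difference of fluxes minus
`c² u̇ (u₊ - 2 u + u₋)`. Summed over the three directions, the latter is exactly the Laplacian term
of the equation of motion, so apart from the fluxes only the power of the damping forces remains.
-/

open scoped Topology

theorem hasDerivAt_half_mul_sq {𝕜 𝕜' : Type*} [NontriviallyNormedField 𝕜] [NormedField 𝕜']
    [NormedAlgebra 𝕜 𝕜'] [NeZero (2 : 𝕜')] {f : 𝕜 → 𝕜'} {f' : 𝕜'} {x : 𝕜} (k : 𝕜')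
    (hf : HasDerivAt f f' x) :
    HasDerivAt (fun y => k / 2 * f y ^ 2) (k * f x * f') x := by
  refine ((hf.fun_pow 2).const_mul (k / 2)).congr_deriv ?_
  field_simp
  ring

section Lattice

variable (c : ℝ) {μ J β γ : ℝ} {V : ℝ → ℝ} (u : ℤ → ℤ → ℤ → ℝ → ℝ) (m n p : ℤ) (t : ℝ)

theorem dLap_eq_sum_second_differences :
    dLap u m n p t = (u (m + 1) n p t - 2 * u m n p t + u (m - 1) n p t)
      + (u m (n + 1) p t - 2 * u m n p t + u m (n - 1) p t)
      + (u m n (p + 1) t - 2 * u m n p t + u m n (p - 1) t) := by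
  rw [dLap]
  ring

theorem fluxX_sub_fluxX_add_one :
    fluxX c u m n p t - fluxX c u (m + 1) n p t
      = c ^ 2 * (u (m + 1) n p t - u m n p t) * (ud u (m + 1) n p t - ud u m n p t)
        + c ^ 2 * (u (m + 1) n p t - 2 * u m n p t + u (m - 1) n p t) * ud u m n p t := by
  simp only [fluxX, add_sub_cancel_right]
  ring

theorem fluxY_sub_fluxY_add_one :
    fluxY c u m n p t - fluxY c u m (n + 1) p t
      = c ^ 2 * (u m (n + 1) p t - u m n p t) * (ud u m (n + 1) p t - ud u m n p t)
        + c ^ 2 * (u m (n + 1) p t - 2 * u m n p t + u m (n - 1) p t) * ud u m n p t := by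
  simp only [fluxY, add_sub_cancel_right]
  ring

theorem fluxZ_sub_fluxZ_add_one :
    fluxZ c u m n p t - fluxZ c u m n (p + 1) t
      = c ^ 2 * (u m n (p + 1) t - u m n p t) * (ud u m n (p + 1) t - ud u m n p t)
        + c ^ 2 * (u m n (p + 1) t - 2 * u m n p t + u m n (p - 1) t) * ud u m n p t := by
  simp only [fluxZ, add_sub_cancel_right]
  ring

variable {c u m n p t}

theorem hasDerivAt_nodeH (hV : DifferentiableAt ℝ V (u m n p t))
    (hu : DifferentiableAt ℝ (u m n p) t) (hud : DifferentiableAt ℝ (ud u m n p) t)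
    (hx : DifferentiableAt ℝ (u (m + 1) n p) t) (hy : DifferentiableAt ℝ (u m (n + 1) p) t)
    (hz : DifferentiableAt ℝ (u m n (p + 1)) t) :
    HasDerivAt (nodeH c μ J V u m n p)
      ((deriv (ud u m n p) t + μ * u m n p t + deriv V (u m n p t) - J) * ud u m n p t
        + c ^ 2 * (u (m + 1) n p t - u m n p t) * (ud u (m + 1) n p t - ud u m n p t)
        + c ^ 2 * (u m (n + 1) p t - u m n p t) * (ud u m (n + 1) p t - ud u m n p t)
        + c ^ 2 * (u m n (p + 1) t - u m n p t) * (ud u m n (p + 1) t - ud u m n p t)) t := by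
  have kinetic := hasDerivAt_half_mul_sq 1 hud.hasDerivAt
  have bondX := hasDerivAt_half_mul_sq (c ^ 2) (hx.hasDerivAt.fun_sub hu.hasDerivAt)
  have bondY := hasDerivAt_half_mul_sq (c ^ 2) (hy.hasDerivAt.fun_sub hu.hasDerivAt)
  have bondZ := hasDerivAt_half_mul_sq (c ^ 2) (hz.hasDerivAt.fun_sub hu.hasDerivAt)
  have harmonic := hasDerivAt_half_mul_sq μ hu.hasDerivAt
  have onSite := hV.hasDerivAt.comp t hu.hasDerivAt
  have driving := hu.hasDerivAt.const_mul J
  refine ((((((kinetic.fun_add bondX).fun_add bondY).fun_add bondZ).fun_add harmonic).fun_add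
    onSite).fun_sub driving).congr_of_eventuallyEq (.of_forall fun s => ?_) |>.congr_deriv ?_
  · simp only [nodeH, Function.comp_apply]
    ring
  · simp only [ud]
    ring

theorem hasDerivAt_nodeH_residual_mul_add_flux (hV : DifferentiableAt ℝ V (u m n p t))
    (hu : DifferentiableAt ℝ (u m n p) t) (hud : DifferentiableAt ℝ (ud u m n p) t)
    (hx : DifferentiableAt ℝ (u (m + 1) n p) t) (hy : DifferentiableAt ℝ (u m (n + 1) p) t)
    (hz : DifferentiableAt ℝ (u m n (p + 1)) t) :
    HasDerivAt (nodeH c μ J V u m n p)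
      ((deriv (ud u m n p) t - c ^ 2 * dLap u m n p t + μ * u m n p t
          + deriv V (u m n p t) - J) * ud u m n p t
        + (fluxX c u m n p t - fluxX c u (m + 1) n p t)
        + (fluxY c u m n p t - fluxY c u m (n + 1) p t)
        + (fluxZ c u m n p t - fluxZ c u m n (p + 1) t)) t := by
  refine (hasDerivAt_nodeH hV hu hud hx hy hz).congr_deriv ?_
  rw [fluxX_sub_fluxX_add_one, fluxY_sub_fluxY_add_one, fluxZ_sub_fluxZ_add_one,
    dLap_eq_sum_second_differences]
  ring

theorem node_hamiltonian_rate_general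
    (hV : DifferentiableAt ℝ V (u m n p t))
    (hu : ∀ i j l : ℤ, |i - m| + |j - n| + |l - p| ≤ 1 →
      ∀ᶠ s in 𝓝 t, DifferentiableAt ℝ (u i j l) s)
    (hud : DifferentiableAt ℝ (ud u m n p) t)
    (heq : deriv (ud u m n p) t - c ^ 2 * dLap u m n p t + μ * u m n p t
        + deriv V (u m n p t) - J
      = β * dLap (ud u) m n p t - γ * ud u m n p t) :
    HasDerivAt (nodeH c μ J V u m n p)
      ((fluxX c u m n p t - fluxX c u (m + 1) n p t)
        + (fluxY c u m n p t - fluxY c u m (n + 1) p t)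
        + (fluxZ c u m n p t - fluxZ c u m n (p + 1) t)
        + β * (ud u (m + 1) n p t - 2 * ud u m n p t + ud u (m - 1) n p t)
            * ud u m n p t
        + β * (ud u m (n + 1) p t - 2 * ud u m n p t + ud u m (n - 1) p t)
            * ud u m n p t
        + β * (ud u m n (p + 1) t - 2 * ud u m n p t + ud u m n (p - 1) t)
            * ud u m n p t
        - γ * (ud u m n p t) ^ 2) t := by
  have hut {i j l : ℤ} (h : |i - m| + |j - n| + |l - p| ≤ 1) : DifferentiableAt ℝ (u i j l) t :=
    (hu i j l h).self_of_nhds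
  refine (hasDerivAt_nodeH_residual_mul_add_flux hV (hut (by simp)) hud (hut (by simp))
    (hut (by simp)) (hut (by simp))).congr_deriv ?_
  rw [heq, dLap_eq_sum_second_differences]
  ring

end Lattice

/-- Rate of change of the Hamiltonian of an interior lattice node. -/
theorem node_hamiltonian_rate
    (N : ℕ) (hN : 1 ≤ N) (c μ J β γ : ℝ) (hc : 0 < c) (hβ : 0 ≤ β) (hγ : 0 ≤ γ)
    (V : ℝ → ℝ) (hV : ContDiff ℝ 1 V)
    (u : ℤ → ℤ → ℤ → ℝ → ℝ)
    (hdiff : ∀ i j l : ℤ, i ∈ Icc (0:ℤ) (N + 1) → j ∈ Icc (0:ℤ) (N + 1) →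
      l ∈ Icc (0:ℤ) (N + 1) → ∀ s : ℝ,
        DifferentiableAt ℝ (u i j l) s ∧ DifferentiableAt ℝ (deriv (u i j l)) s)
    (m n p : ℤ) (hm : m ∈ Icc (1:ℤ) (N:ℤ)) (hn : n ∈ Icc (1:ℤ) (N:ℤ))
    (hp : p ∈ Icc (1:ℤ) (N:ℤ)) (t : ℝ)
    (heq : deriv (deriv (u m n p)) t - c ^ 2 * dLap u m n p t + μ * u m n p t
        + deriv V (u m n p t) - J
      = β * dLap (fun i j l s => deriv (u i j l) s) m n p t
        - γ * deriv (u m n p) t) :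
    HasDerivAt (fun s => nodeH c μ J V u m n p s)
      ((fluxX c u m n p t - fluxX c u (m + 1) n p t)
        + (fluxY c u m n p t - fluxY c u m (n + 1) p t)
        + (fluxZ c u m n p t - fluxZ c u m n (p + 1) t)
        + β * (ud u (m + 1) n p t - 2 * ud u m n p t + ud u (m - 1) n p t)
            * ud u m n p t
        + β * (ud u m (n + 1) p t - 2 * ud u m n p t + ud u m (n - 1) p t)
            * ud u m n p t
        + β * (ud u m n (p + 1) t - 2 * ud u m n p t + ud u m n (p - 1) t)
            * ud u m n p t
        - γ * (ud u m n p t) ^ 2)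
      t := by
  simp only [mem_Icc] at hm hn hp hdiff
  exact node_hamiltonian_rate_general (hV.differentiable one_ne_zero _)
    (fun i j l h => .of_forall fun s =>
      (hdiff i j l (by grind) (by grind) (by grind) s).1)
    (hdiff m n p (by grind) (by grind) (by grind) t).2 heq

end
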